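/- (Invariance of the variational derivative under moving frames.) Let g : ℝ × ℝⁿ → ℝⁿ be a moving reference frame, L : ℝⁿ × ℝⁿ × ℝ → ℝ a smooth Lagrangian, and define the Lagrangian in the moving frame by l(x, ẋ, t) := L(g_t(x), D g_t|_x(ẋ) + ω_t(g_t(x)), t). Let Γ(t) be a smooth curve and ξ(t) a smooth vector field along Γ, and set γ(t) := g_t(Γ(t)) and η(t) := D g_t|_{Γ(t)}(ξ(t)). Then the variational derivative of L along γ in the direction η equals the variational derivative of l along Γ in the direction ξ: δL(η)|_γ(t) = δl(ξ)|_Γ(t) for all t. -/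

import Mathlib

open scoped ContDiff

/-- The angular velocity in the fixed frame. -/
noncomputable def omegaFixed {n : ℕ} (g ginv : ℝ → (Fin n → ℝ) → (Fin n → ℝ))
    (t : ℝ) (q : Fin n → ℝ) : Fin n → ℝ :=
  deriv (fun s => g (t + s) (ginv t q)) 0

/-- The variational derivative of a Lagrangian `L(q, q̇, t)` along a curve `γ` in the
direction of a vector field `η` along `γ`:
`δL(η)|_γ(t) = Σ_i (∂L/∂q^i − (d/dt)(∂L/∂q̇^i)) η^i(t)`, written invariantly. -/
noncomputable def varDeriv {n : ℕ} (L : (Fin n → ℝ) → (Fin n → ℝ) → ℝ → ℝ)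
    (γ η : ℝ → (Fin n → ℝ)) (t : ℝ) : ℝ :=
  fderiv ℝ (fun q => L q (deriv γ t) t) (γ t) (η t)
    - deriv (fun s => fderiv ℝ (fun v => L (γ s) v s) (deriv γ s) (η t)) t

/-!
A moving frame induces the map `Φ (x, v, t) = (g_t x, Dg_t v + ∂ₜg_t x, t)` of velocity phase
spaces, which carries the lift `(Γ, Γ̇, t)` of a curve to the lift of its image and satisfies
`l = L ∘ Φ`. Integration by parts writes the variational derivative of `L` in a direction `a` as
`DL (a, ȧ, 0) - d/dt (DL (0, a, 0))`. For `a = Dg_t w` the equality of mixed derivatives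
`d/dt (Dg_t w) = D (Dg_t v + ∂ₜg_t) w` says that `(a, ȧ, 0)` is `DΦ (w, 0, 0)`, while `(0, a, 0)` is
`DΦ (0, w, 0)`, so by the chain rule both terms agree with those of `l` in the direction `w`.
-/

open Function

variable {E F : Type*} [NormedAddCommGroup E] [NormedSpace ℝ E]
  [NormedAddCommGroup F] [NormedSpace ℝ F]

section VariationalDerivative

/-- The variational derivative at time `t` of a Lagrangian on a normed space along the curve `γ` in
the direction of the vector `w`. For `E = Fin n → ℝ` and `w = η t` it unfolds to `varDeriv`; a
vector suffices because the direction is held fixed under the time derivative. -/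
noncomputable def variationalDerivative (L : E → E → ℝ → ℝ) (γ : ℝ → E) (t : ℝ) (w : E) : ℝ :=
  fderiv ℝ (fun q => L q (deriv γ t) t) (γ t) w
    - deriv (fun s => fderiv ℝ (fun v => L (γ s) v s) (deriv γ s) w) t

/-- The lift of a curve to velocity phase space with time, whose points are the triples
`(q, q̇, t)` on which Lagrangians are evaluated. -/
noncomputable def velocityLift (γ : ℝ → E) (t : ℝ) : E × E × ℝ :=
  (γ t, deriv γ t, t)

theorem differentiable_velocityLift {γ : ℝ → E} (hγ : ContDiff ℝ 2 γ) :
    Differentiable ℝ (velocityLift γ) :=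
  (hγ.differentiable two_ne_zero).prodMk (hγ.differentiable_deriv_two.prodMk differentiable_id)

theorem variationalDerivative_eq_fderiv_uncurry {L : E → E → ℝ → ℝ} (hL : Differentiable ℝ ↿L)
    (γ : ℝ → E) (t : ℝ) (w : E) :
    variationalDerivative L γ t w =
      fderiv ℝ ↿L (velocityLift γ t) (w, 0, 0)
        - deriv (fun s => fderiv ℝ ↿L (velocityLift γ s) (0, w, 0)) t := by
  have position_partial (q v : E) (s : ℝ) :
      fderiv ℝ (fun q => L q v s) q w = fderiv ℝ ↿L (q, v, s) (w, 0, 0) :=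
    DFunLike.congr_fun (HasFDerivAt.comp (g := ↿L) (f := fun q => (q, v, s)) q
      (hL _).hasFDerivAt (hasFDerivAt_prodMk_left q (v, s))).fderiv w
  have velocity_partial (q v : E) (s : ℝ) :
      fderiv ℝ (fun v => L q v s) v w = fderiv ℝ ↿L (q, v, s) (0, w, 0) :=
    DFunLike.congr_fun (HasFDerivAt.comp (g := ↿L) (f := fun v => (q, v, s)) v (hL _).hasFDerivAt
      ((hasFDerivAt_const q v).prodMk (hasFDerivAt_prodMk_left v s))).fderiv w
  simp only [variationalDerivative, position_partial, velocity_partial, velocityLift]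

theorem variationalDerivative_eq_sub_deriv_of_hasDerivAt {L : E → E → ℝ → ℝ}
    (hL : ContDiff ℝ 2 ↿L) {γ : ℝ → E} (hγ : ContDiff ℝ 2 γ) {a : ℝ → E} {a' : E} {t : ℝ}
    (ha : HasDerivAt a a' t) :
    variationalDerivative L γ t (a t) =
      fderiv ℝ ↿L (velocityLift γ t) (a t, a', 0)
        - deriv (fun s => fderiv ℝ ↿L (velocityLift γ s) (0, a s, 0)) t := by
  have hDL : Differentiable ℝ (fderiv ℝ ↿L) := by fun_prop
  have covector : HasDerivAt (fun s => fderiv ℝ ↿L (velocityLift γ s)) _ t :=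
    (hDL.comp (differentiable_velocityLift hγ) t).hasDerivAt
  have fixed_direction := covector.clm_apply (hasDerivAt_const t ((0 : E), a t, (0 : ℝ)))
  have moving_direction := covector.clm_apply
    ((hasDerivAt_const t (0 : E)).prodMk (ha.prodMk (hasDerivAt_const t (0 : ℝ))))
  have direction_split : ((a t, a', 0) : E × E × ℝ) = (a t, 0, 0) + (0, a', 0) := by simp
  rw [variationalDerivative_eq_fderiv_uncurry (hL.differentiable two_ne_zero),
    fixed_direction.deriv, moving_direction.deriv, direction_split, map_add, Prod.mk_zero_zero,
    map_zero]
  ring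

end VariationalDerivative

section MovingFrame

/-- The Lagrangian `l` seen from a moving frame `g`. The drift `ω_t (g_t x)` is encoded as the time
derivative of `g` at fixed `x`, so that `g_t` need not be invertible. -/
noncomputable def movingFrameLagrangian (g : ℝ → E → F) (L : F → F → ℝ → ℝ) (x v : E) (t : ℝ) : ℝ :=
  L (g t x) (fderiv ℝ (g t) x v + deriv (fun s => g s x) t) t

/-- The map of velocity phase spaces `Φ (x, v, t) = (g_t x, Dg_t v + ∂ₜg_t x, t)` induced by a
moving frame; the velocity component is written as the derivative of `(t, x) ↦ g_t x` in the
direction `(1, v)`. -/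
noncomputable def framePhaseMap (g : ℝ → E → F) (p : E × E × ℝ) : F × F × ℝ :=
  (g p.2.2 p.1, fderiv ℝ ↿g (p.2.2, p.1) (1, p.2.1), p.2.2)

variable {g : ℝ → E → F}

theorem fderiv_apply_eq_fderiv_uncurry {t : ℝ} {x : E} (hg : DifferentiableAt ℝ ↿g (t, x)) (v : E) :
    fderiv ℝ (g t) x v = fderiv ℝ ↿g (t, x) (0, v) :=
  DFunLike.congr_fun (hg.hasFDerivAt.comp x (hasFDerivAt_prodMk_right t x)).fderiv v

theorem fderiv_apply_add_deriv_eq_fderiv_uncurry {t : ℝ} {x : E}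
    (hg : DifferentiableAt ℝ ↿g (t, x)) (v : E) :
    fderiv ℝ (g t) x v + deriv (fun s => g s x) t = fderiv ℝ ↿g (t, x) (1, v) := by
  have time_partial : deriv (fun s => g s x) t = fderiv ℝ ↿g (t, x) (1, 0) :=
    (HasFDerivAt.comp_hasDerivAt (l := ↿g) (f := fun s => (s, x)) t hg.hasFDerivAt
      ((hasDerivAt_id t).prodMk (hasDerivAt_const t x))).deriv
  rw [fderiv_apply_eq_fderiv_uncurry hg, time_partial, ← map_add, Prod.mk_add_mk,
    zero_add, add_zero]

theorem uncurry_movingFrameLagrangian (hg : Differentiable ℝ ↿g) (L : F → F → ℝ → ℝ) :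
    ↿(movingFrameLagrangian g L) = ↿L ∘ framePhaseMap g := by
  funext ⟨x, v, t⟩
  exact congrArg (L (g t x) · t) (fderiv_apply_add_deriv_eq_fderiv_uncurry (hg (t, x)) v)

theorem hasDerivAt_graph {Γ : ℝ → E} {t : ℝ} (hΓ : DifferentiableAt ℝ Γ t) :
    HasDerivAt (fun s => (s, Γ s)) (1, deriv Γ t) t :=
  (hasDerivAt_id t).prodMk hΓ.hasDerivAt

theorem framePhaseMap_velocityLift {Γ : ℝ → E} {t : ℝ} (hg : DifferentiableAt ℝ ↿g (t, Γ t))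
    (hΓ : DifferentiableAt ℝ Γ t) :
    framePhaseMap g (velocityLift Γ t) = velocityLift (fun s => g s (Γ s)) t := by
  have velocity : deriv (fun s => g s (Γ s)) t = fderiv ℝ ↿g (t, Γ t) (1, deriv Γ t) :=
    (HasFDerivAt.comp_hasDerivAt (l := ↿g) (f := fun s => (s, Γ s)) t hg.hasFDerivAt
      (hasDerivAt_graph hΓ)).deriv
  simp only [framePhaseMap, velocityLift, velocity]

theorem differentiable_framePhaseMap (hg : ContDiff ℝ 2 ↿g) :
    Differentiable ℝ (framePhaseMap g) := by
  have hg' : Differentiable ℝ ↿g := hg.differentiable two_ne_zero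
  have hDg : Differentiable ℝ (fderiv ℝ ↿g) := by fun_prop
  have base : Differentiable ℝ fun p : E × E × ℝ => (p.2.2, p.1) := by fun_prop
  have velocity : Differentiable ℝ fun p : E × E × ℝ => fderiv ℝ ↿g (p.2.2, p.1) (1, p.2.1) :=
    (hDg.comp base).clm_apply (by fun_prop)
  exact (hg'.comp base).prodMk (velocity.prodMk (by fun_prop))

theorem fderiv_framePhaseMap_apply (hg : ContDiff ℝ 2 ↿g) (x v y w : E) (t τ : ℝ) :
    fderiv ℝ (framePhaseMap g) (x, v, t) (y, w, τ) =
      (fderiv ℝ ↿g (t, x) (τ, y),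
        fderiv ℝ (fderiv ℝ ↿g) (t, x) (τ, y) (1, v) + fderiv ℝ ↿g (t, x) (0, w), τ) := by
  have hg' : Differentiable ℝ ↿g := hg.differentiable two_ne_zero
  have hDg : Differentiable ℝ (fderiv ℝ ↿g) := by fun_prop
  have time : HasFDerivAt (fun p : E × E × ℝ => p.2.2) _ (x, v, t) :=
    (hasFDerivAt_snd (𝕜 := ℝ) (p := (x, v, t))).snd
  have base : HasFDerivAt (fun p : E × E × ℝ => (p.2.2, p.1)) _ (x, v, t) :=
    time.prodMk hasFDerivAt_fst
  have position := (hg' (t, x)).hasFDerivAt.comp (x, v, t) base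
  have velocity := ((hDg (t, x)).hasFDerivAt.comp (x, v, t) base).clm_apply
    ((hasFDerivAt_const (1 : ℝ) (x, v, t)).prodMk (hasFDerivAt_snd (𝕜 := ℝ) (p := (x, v, t))).fst)
  have total : HasFDerivAt (framePhaseMap g) _ (x, v, t) :=
    position.prodMk (velocity.prodMk time)
  rw [total.fderiv]
  simp [add_comm]

theorem hasDerivAt_fderiv_apply_along (hg : ContDiff ℝ 2 ↿g) {Γ : ℝ → E} {t : ℝ}
    (hΓ : DifferentiableAt ℝ Γ t) (w : E) :
    HasDerivAt (fun s => fderiv ℝ (g s) (Γ s) w)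
      (fderiv ℝ (fderiv ℝ ↿g) (t, Γ t) (0, w) (1, deriv Γ t)) t := by
  have mixed_partials : IsSymmSndFDerivAt ℝ ↿g (t, Γ t) :=
    hg.contDiffAt.isSymmSndFDerivAt (by simp)
  have hDg : Differentiable ℝ (fderiv ℝ ↿g) := by fun_prop
  have along : HasDerivAt (fun s => fderiv ℝ ↿g (s, Γ s)) _ t :=
    (hDg (t, Γ t)).hasFDerivAt.comp_hasDerivAt t (hasDerivAt_graph hΓ)
  simp only [fderiv_apply_eq_fderiv_uncurry (hg.differentiable two_ne_zero _)]
  rw [mixed_partials.eq]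
  simpa using along.clm_apply (hasDerivAt_const t ((0 : ℝ), w))

theorem variational_derivative_invariance_general (hg : ContDiff ℝ 2 ↿g) {L : F → F → ℝ → ℝ}
    (hL : ContDiff ℝ 2 ↿L) {Γ : ℝ → E} (hΓ : ContDiff ℝ 2 Γ) (t : ℝ) (w : E) :
    variationalDerivative L (fun s => g s (Γ s)) t (fderiv ℝ (g t) (Γ t) w) =
      variationalDerivative (movingFrameLagrangian g L) Γ t w := by
  have hg' : Differentiable ℝ ↿g := hg.differentiable two_ne_zero
  have hL' : Differentiable ℝ ↿L := hL.differentiable two_ne_zero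
  have hΓ' : Differentiable ℝ Γ := hΓ.differentiable two_ne_zero
  have hΦ : Differentiable ℝ (framePhaseMap g) := differentiable_framePhaseMap hg
  have hl : Differentiable ℝ ↿(movingFrameLagrangian g L) := by
    rw [uncurry_movingFrameLagrangian hg']
    exact hL'.comp hΦ
  have chain_rule (s : ℝ) (u : E × E × ℝ) :
      fderiv ℝ ↿(movingFrameLagrangian g L) (velocityLift Γ s) u =
        fderiv ℝ ↿L (velocityLift (fun r => g r (Γ r)) s)
          (fderiv ℝ (framePhaseMap g) (velocityLift Γ s) u) := by
    rw [uncurry_movingFrameLagrangian hg', fderiv_comp _ (hL' _) (hΦ _),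
      framePhaseMap_velocityLift (hg' _) (hΓ' s), ContinuousLinearMap.comp_apply]
  have hγ : ContDiff ℝ 2 fun s => g s (Γ s) :=
    hg.comp (g := ↿g) (f := fun s => (s, Γ s)) (contDiff_id.prodMk hΓ)
  have ha := hasDerivAt_fderiv_apply_along hg (hΓ' t) w
  rw [variationalDerivative_eq_sub_deriv_of_hasDerivAt hL hγ ha,
    variationalDerivative_eq_fderiv_uncurry hl]
  simp only [chain_rule]
  simp [velocityLift, fderiv_framePhaseMap_apply hg, fderiv_apply_eq_fderiv_uncurry (hg' _),
    Prod.mk_zero_zero]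

theorem omegaFixed_apply_of_leftInverse {n : ℕ} {g ginv : ℝ → (Fin n → ℝ) → (Fin n → ℝ)}
    {t : ℝ} (hleft : LeftInverse (ginv t) (g t)) (x : Fin n → ℝ) :
    omegaFixed g ginv t (g t x) = deriv (fun s => g s x) t := by
  rw [omegaFixed, hleft x, deriv_comp_const_add (fun s => g s x), add_zero]

end MovingFrame

/-- Invariance of the variational derivative under moving frames:
with `l(x,ẋ,t) := L(g_t(x), D g_t|_x(ẋ) + ω_t(g_t(x)), t)`, `γ(t) := g_t(Γ(t))` and
`η(t) := D g_t|_{Γ(t)}(ξ(t))`, one has `δL(η)|_γ(t) = δl(ξ)|_Γ(t)` for all `t`. -/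
theorem variational_derivative_invariance {n : ℕ}
    (g ginv : ℝ → (Fin n → ℝ) → (Fin n → ℝ))
    (hg : ContDiff ℝ ∞ (fun p : ℝ × (Fin n → ℝ) => g p.1 p.2))
    (hginv : ContDiff ℝ ∞ (fun p : ℝ × (Fin n → ℝ) => ginv p.1 p.2))
    (hleft : ∀ t x, ginv t (g t x) = x)
    (hright : ∀ t q, g t (ginv t q) = q)
    (L : (Fin n → ℝ) → (Fin n → ℝ) → ℝ → ℝ)
    (hL : ContDiff ℝ ∞ (fun p : (Fin n → ℝ) × (Fin n → ℝ) × ℝ => L p.1 p.2.1 p.2.2))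
    (Γ ξ : ℝ → (Fin n → ℝ)) (hΓ : ContDiff ℝ ∞ Γ) (hξ : ContDiff ℝ ∞ ξ)
    (t : ℝ) :
    varDeriv L (fun s => g s (Γ s)) (fun s => fderiv ℝ (g s) (Γ s) (ξ s)) t
      = varDeriv
          (fun x v τ => L (g τ x) (fderiv ℝ (g τ) x v + omegaFixed g ginv τ (g τ x)) τ)
          Γ ξ t := by
  simp only [omegaFixed_apply_of_leftInverse (hleft _)]
  exact variational_derivative_invariance_general (hg.of_le ENat.LEInfty.out)
    (hL.of_le ENat.LEInfty.out) (hΓ.of_le ENat.LEInfty.out) t (ξ t)
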